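/- The extended group operation (u,γ) ★ (v,δ) = (v + δ_∅ u, γ ⋆ Ξ_u δ) makes Ḡ = ℂ^d × G into a group with identity (0,𝟙); in particular the operation is associative, (0,𝟙) is a two-sided unit, and every element of Ḡ has an inverse. -/

import Mathlib

noncomputable def conv {A : Type*} (δ δ' : List A → ℂ) : List A → ℂ :=
  fun w => ∑ j ∈ Finset.range (w.length + 1), δ (w.take j) * δ' (w.drop j)

noncomputable def convOne {A : Type*} [DecidableEq A] : List A → ℂ :=
  fun w => if w = [] then 1 else 0

def shuffle {A : Type*} : List A → List A → Multiset (List A)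
  | [], w => {w}
  | l :: w, [] => {l :: w}
  | a :: w, b :: w' =>
      ((shuffle w (b :: w')).map (a :: ·)) + ((shuffle (a :: w) w').map (b :: ·))
  termination_by w w' => w.length + w'.length

def IsShuffleChar {A : Type*} (γ : List A → ℂ) : Prop :=
  γ [] = 1 ∧ ∀ w w' : List A, γ w * γ w' = ((shuffle w w').map γ).sum

/-- `Ξ_u`: multiplies the coefficient of `ℓ₁⋯ℓₙ` by `exp(ν^u_{ℓ₁+⋯+ℓₙ})`,
where `ν^u_ℓ = Σⱼ uⱼ ν_{j,ℓ}` (the empty word coefficient is fixed since the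
empty sum of letters is `0` and `ν` is additive with `ν_{j,0}=0`). -/
noncomputable def XiU {d : ℕ} {A : Type*} [AddCommMonoid A]
    (ν : Fin d → A → ℂ) (u : Fin d → ℂ) (δ : List A → ℂ) : List A → ℂ :=
  fun w => Complex.exp (∑ j, u j * ν j w.sum) * δ w

/-- The extended group operation `(u,γ) ★ (v,δ) = (v + δ_∅ u, γ ⋆ Ξ_u δ)`. -/
noncomputable def extStar {d : ℕ} {A : Type*} [AddCommMonoid A]
    (ν : Fin d → A → ℂ) (p q : (Fin d → ℂ) × (List A → ℂ)) :
    (Fin d → ℂ) × (List A → ℂ) :=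
  (q.1 + q.2 [] • p.1, conv p.2 (XiU ν p.1 q.2))


noncomputable def shF {A : Type*} (γ : List A → ℂ) (w w' : List A) : ℂ :=
  ((shuffle w w').map γ).sum

theorem shF_nil_left {A : Type*} (γ : List A → ℂ) (w : List A) : shF γ [] w = γ w := by
  simp [shF, shuffle]

theorem shF_nil_right {A : Type*} (γ : List A → ℂ) (w : List A) : shF γ w [] = γ w := by
  cases w <;> simp [shF, shuffle]

theorem shF_cons {A : Type*} (γ : List A → ℂ) (a b : A) (w w' : List A) :
    shF γ (a :: w) (b :: w') = shF (fun x => γ (a :: x)) w (b :: w')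
      + shF (fun x => γ (b :: x)) (a :: w) w' := by
  simp [shF, shuffle, Multiset.map_map, Function.comp_def]

theorem shF_const {A : Type*} (c : ℂ) (γ : List A → ℂ) (w w' : List A) :
    shF (fun x => c * γ x) w w' = c * shF γ w w' := by
  simp [shF, Multiset.sum_map_mul_left]

theorem shF_char {A : Type*} (χ : List A → ℂ) (h0 : χ [] = 1)
    (hc : ∀ a x, χ (a :: x) = χ [a] * χ x) :
    ∀ (w w' : List A) (γ : List A → ℂ),
      shF (fun x => χ x * γ x) w w' = χ w * χ w' * shF γ w w'
  | [], w', γ => by simp [shF_nil_left, h0]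
  | a :: w, [], γ => by simp [shF_nil_right, h0]
  | a :: w, b :: w', γ => by
      rw [shF_cons, shF_cons]
      have e : ∀ c : A, (fun x => χ (c :: x) * γ (c :: x)) =
          fun x => χ [c] * (χ x * γ (c :: x)) := by
        intro c; funext x; rw [hc, mul_assoc]
      rw [e a, e b, shF_const, shF_const,
        shF_char χ h0 hc w (b :: w') (fun x => γ (a :: x)),
        shF_char χ h0 hc (a :: w) w' (fun x => γ (b :: x)), hc a w, hc b w']
      ring
  termination_by w w' => w.length + w'.length

theorem isChar_iff {A : Type*} (γ : List A → ℂ) :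
    IsShuffleChar γ ↔ γ [] = 1 ∧ ∀ w w', γ w * γ w' = shF γ w w' := Iff.rfl

theorem isChar_twist {A : Type*} (χ : List A → ℂ) (h0 : χ [] = 1)
    (hc : ∀ a x, χ (a :: x) = χ [a] * χ x) {γ : List A → ℂ} (h : IsShuffleChar γ) :
    IsShuffleChar (fun x => χ x * γ x) := by
  rw [isChar_iff] at h ⊢
  refine ⟨by simp [h0, h.1], fun w w' => ?_⟩
  rw [shF_char χ h0 hc, ← h.2]
  ring

theorem shF_snoc {A : Type*} (a b : A) : ∀ (u v : List A) (γ : List A → ℂ),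
    shF γ (u ++ [a]) (v ++ [b]) = shF (fun x => γ (x ++ [a])) u (v ++ [b])
      + shF (fun x => γ (x ++ [b])) (u ++ [a]) v
  | [], [], γ => by
      simp [shF_cons, shF_nil_left, shF_nil_right, add_comm]
  | c :: u, [], γ => by
      have := shF_snoc a b u [] (fun x => γ (c :: x))
      simp only [List.nil_append, List.cons_append, shF_cons, shF_nil_right] at this ⊢
      rw [this]; ring
  | [], c :: v, γ => by
      have := shF_snoc a b [] v (fun x => γ (c :: x))
      simp only [List.nil_append, List.cons_append, shF_cons, shF_nil_left] at this ⊢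
      rw [this]; ring
  | c :: u, e :: v, γ => by
      have h1 := shF_snoc a b u (e :: v) (fun x => γ (c :: x))
      have h2 := shF_snoc a b (c :: u) v (fun x => γ (e :: x))
      simp only [List.cons_append] at h1 h2 ⊢
      rw [shF_cons, h1, h2, shF_cons, shF_cons]
      simp only [List.cons_append]
      ring
  termination_by u v => u.length + v.length

theorem shF_reverse {A : Type*} : ∀ (w w' : List A) (γ : List A → ℂ),
    shF γ w.reverse w'.reverse = shF (fun x => γ x.reverse) w w'
  | [], w', γ => by simp [shF_nil_left]
  | a :: w, [], γ => by simp [shF_nil_right]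
  | a :: w, b :: w', γ => by
      have h1 := shF_reverse w (b :: w') (fun x => γ (x ++ [a]))
      have h2 := shF_reverse (a :: w) w' (fun x => γ (x ++ [b]))
      simp only [List.reverse_cons] at h1 h2 ⊢
      rw [shF_snoc, h1, h2, shF_cons]
      simp only [List.reverse_cons]
  termination_by w w' => w.length + w'.length

noncomputable def antip {A : Type*} (γ : List A → ℂ) : List A → ℂ :=
  fun x => (-1) ^ x.length * γ x.reverse

theorem isChar_antip {A : Type*} {γ : List A → ℂ} (h : IsShuffleChar γ) :
    IsShuffleChar (antip γ) := by
  refine isChar_twist (fun x => (-1) ^ x.length) (by simp) (fun a x => ?_)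
    (γ := fun x => γ x.reverse) ?_
  · simp [pow_succ]
  · rw [isChar_iff] at h ⊢
    refine ⟨by simpa using h.1, fun w w' => ?_⟩
    rw [h.2, shF_reverse]

theorem antip_antip {A : Type*} (γ : List A → ℂ) : antip (antip γ) = γ := by
  funext x
  simp only [antip, List.length_reverse, List.reverse_reverse, ← mul_assoc, ← mul_pow]
  simp

theorem conv_nil {A : Type*} (γ δ : List A → ℂ) : conv γ δ [] = γ [] * δ [] := by
  simp [conv]

theorem conv_cons {A : Type*} (γ δ : List A → ℂ) (a : A) (w : List A) :
    conv γ δ (a :: w) = γ [] * δ (a :: w) + conv (fun x => γ (a :: x)) δ w := by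
  simp only [conv, List.length_cons]
  rw [Finset.sum_range_succ']
  simp [add_comm]

theorem conv_assoc {A : Type*} (γ δ ε : List A → ℂ) :
    conv (conv γ δ) ε = conv γ (conv δ ε) := by
  funext w
  induction w generalizing γ δ with
  | nil => simp [conv_nil, mul_assoc]
  | cons a w ih =>
    rw [conv_cons, conv_cons γ, conv_cons δ, conv_nil, ← ih]
    have : conv (fun x => conv γ δ (a :: x)) ε w =
        γ [] * conv (fun x => δ (a :: x)) ε w + conv (conv (fun x => γ (a :: x)) δ) ε w := by
      simp only [conv_cons]
      conv_lhs => unfold conv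
      conv_rhs => arg 1; unfold conv
      conv_rhs => arg 2; unfold conv
      rw [Finset.mul_sum, ← Finset.sum_add_distrib]
      refine Finset.sum_congr rfl fun j _ => ?_
      simp only [conv]
      ring
    rw [this]; ring

theorem conv_one_left {A : Type*} [DecidableEq A] (γ : List A → ℂ) :
    conv convOne γ = γ := by
  funext w
  cases w with
  | nil => simp [conv_nil, convOne]
  | cons a w => rw [conv_cons]; simp [convOne, conv]

theorem conv_one_right {A : Type*} [DecidableEq A] (γ : List A → ℂ) :
    conv γ convOne = γ := by
  funext w
  induction w generalizing γ with
  | nil => simp [conv_nil, convOne]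
  | cons a w ih => rw [conv_cons, ih]; simp [convOne]

theorem shF_conv {A : Type*} (δ : List A → ℂ) : ∀ (w w' : List A) (γ : List A → ℂ),
    shF (conv γ δ) w w' = ∑ i ∈ Finset.range (w.length + 1), ∑ j ∈ Finset.range (w'.length + 1),
      shF γ (w.take i) (w'.take j) * shF δ (w.drop i) (w'.drop j)
  | [], w', γ => by simp [shF_nil_left, conv]
  | a :: w, [], γ => by simp [shF_nil_right, conv]
  | a :: w, b :: w', γ => by
      have h1 := shF_conv δ w (b :: w') (fun x => γ (a :: x))
      have h2 := shF_conv δ (a :: w) w' (fun x => γ (b :: x))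
      have e : ∀ c : A, ∀ u v : List A, shF (fun x => conv γ δ (c :: x)) u v =
          γ [] * shF (fun x => δ (c :: x)) u v + shF (conv (fun x => γ (c :: x)) δ) u v := by
        intro c u v
        simp only [conv_cons]
        simp only [shF, Multiset.sum_map_add, Multiset.sum_map_mul_left]
      rw [shF_cons, e, e, h1, h2]
      simp only [List.length_cons]
      rw [Finset.sum_range_succ' _ (w.length + 1), Finset.sum_range_succ' _ (w.length + 1)]
      simp only [Finset.sum_range_succ' _ (w'.length + 1), List.take_succ_cons,
        List.drop_succ_cons, List.take_zero, List.drop_zero, shF_nil_left, shF_nil_right,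
        shF_cons, Finset.sum_add_distrib, add_mul, mul_add]
      ring
  termination_by w w' => w.length + w'.length

theorem isChar_conv {A : Type*} {γ δ : List A → ℂ} (h : IsShuffleChar γ)
    (h' : IsShuffleChar δ) : IsShuffleChar (conv γ δ) := by
  rw [isChar_iff] at *
  refine ⟨by simp [conv_nil, h.1, h'.1], fun w w' => ?_⟩
  rw [shF_conv]
  simp only [← h.2, ← h'.2]
  simp only [conv]
  rw [Finset.sum_mul_sum]
  refine Finset.sum_congr rfl fun i _ => Finset.sum_congr rfl fun j _ => ?_
  ring

theorem tele {A : Type*} (γ : List A → ℂ) (w : List A) : ∀ (b : A) (r : List A),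
    ∑ j ∈ Finset.range (w.length + 1),
      (-1) ^ j * shF γ ((w.take j).reverse ++ b :: r) (w.drop j)
      = shF (fun x => γ (b :: x)) r w := by
  induction w with
  | nil => intro b r; simp [shF_nil_right]
  | cons a w ih =>
    intro b r
    have := ih a (b :: r)
    rw [List.length_cons, Finset.sum_range_succ']
    simp only [List.take_succ_cons, List.drop_succ_cons, List.reverse_cons, List.append_assoc,
      List.singleton_append, pow_succ, mul_neg_one, neg_mul, Finset.sum_neg_distrib, this]
    simp [shF_cons]

theorem antip_conv {A : Type*} [DecidableEq A] {γ : List A → ℂ} (h : IsShuffleChar γ) :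
    conv (antip γ) γ = convOne := by
  rw [isChar_iff] at h
  funext w
  cases w with
  | nil => simp [conv_nil, antip, h.1, convOne]
  | cons a w =>
    have := tele γ w a []
    rw [shF_nil_left] at this
    simp only [conv, convOne, List.length_cons]
    rw [Finset.sum_range_succ']
    have e : ∀ j ∈ Finset.range (w.length + 1),
        antip γ ((a :: w).take (j + 1)) * γ ((a :: w).drop (j + 1)) =
        - ((-1) ^ j * shF γ ((w.take j).reverse ++ [a]) (w.drop j)) := by
      intro j hj
      have hj' : min j w.length = j := by
        have := Finset.mem_range.1 hj
        omega
      rw [← h.2]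
      simp [antip, pow_succ, hj', mul_assoc]
    rw [Finset.sum_congr rfl e, Finset.sum_neg_distrib, this]
    simp [antip, h.1]

theorem conv_antip {A : Type*} [DecidableEq A] {γ : List A → ℂ} (h : IsShuffleChar γ) :
    conv γ (antip γ) = convOne := by
  have := antip_conv (isChar_antip h)
  rwa [antip_antip] at this

section
variable {d : ℕ} {A : Type*} [AddCommMonoid A] (ν : Fin d → A → ℂ)

theorem XiU_char (hν : ∀ (j : Fin d) (ℓ ℓ' : A), ν j (ℓ + ℓ') = ν j ℓ + ν j ℓ')
    (hν0 : ∀ j : Fin d, ν j 0 = 0) (u : Fin d → ℂ) {γ : List A → ℂ} (h : IsShuffleChar γ) :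
    IsShuffleChar (XiU ν u γ) := by
  refine isChar_twist (fun w => Complex.exp (∑ j, u j * ν j w.sum)) (by simp [hν0])
    (fun a x => ?_) h
  simp [hν, mul_add, Finset.sum_add_distrib, Complex.exp_add]

theorem XiU_conv (hν : ∀ (j : Fin d) (ℓ ℓ' : A), ν j (ℓ + ℓ') = ν j ℓ + ν j ℓ')
    (u : Fin d → ℂ) (γ δ : List A → ℂ) :
    XiU ν u (conv γ δ) = conv (XiU ν u γ) (XiU ν u δ) := by
  funext w
  simp only [XiU, conv, Finset.mul_sum]
  refine Finset.sum_congr rfl fun i _ => ?_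
  have : w.sum = (w.take i).sum + (w.drop i).sum := by
    rw [← List.sum_append, List.take_append_drop]
  rw [this]
  simp only [hν, mul_add, Finset.sum_add_distrib, Complex.exp_add]
  ring

theorem XiU_XiU (u v : Fin d → ℂ) (γ : List A → ℂ) :
    XiU ν u (XiU ν v γ) = XiU ν (v + u) γ := by
  funext w
  simp only [XiU, Pi.add_apply, add_mul, Finset.sum_add_distrib, Complex.exp_add]
  ring

theorem XiU_zero (γ : List A → ℂ) : XiU ν 0 γ = γ := by
  funext w
  simp [XiU]

theorem XiU_one [DecidableEq A] (hν0 : ∀ j : Fin d, ν j 0 = 0) (u : Fin d → ℂ) :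
    XiU ν u convOne = convOne := by
  funext w
  cases w <;> simp [XiU, convOne, hν0]
end

/-- `Ḡ = ℂ^d × G` is a group under `★`, with identity `(0,𝟙)`. -/
theorem extStar_group {d : ℕ} {A : Type*} [AddCommMonoid A] [DecidableEq A]
    (ν : Fin d → A → ℂ)
    (hν : ∀ (j : Fin d) (ℓ ℓ' : A), ν j (ℓ + ℓ') = ν j ℓ + ν j ℓ')
    (hν0 : ∀ j : Fin d, ν j 0 = 0) :
    (∀ p q : (Fin d → ℂ) × (List A → ℂ), IsShuffleChar p.2 → IsShuffleChar q.2 →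
      IsShuffleChar (extStar ν p q).2) ∧
    (∀ p q r : (Fin d → ℂ) × (List A → ℂ),
      IsShuffleChar p.2 → IsShuffleChar q.2 → IsShuffleChar r.2 →
      extStar ν (extStar ν p q) r = extStar ν p (extStar ν q r)) ∧
    (∀ p : (Fin d → ℂ) × (List A → ℂ), IsShuffleChar p.2 →
      extStar ν ((0 : Fin d → ℂ), (convOne : List A → ℂ)) p = p ∧
      extStar ν p ((0 : Fin d → ℂ), (convOne : List A → ℂ)) = p) ∧
    (∀ p : (Fin d → ℂ) × (List A → ℂ), IsShuffleChar p.2 →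
      ∃ q : (Fin d → ℂ) × (List A → ℂ), IsShuffleChar q.2 ∧
        extStar ν p q = ((0 : Fin d → ℂ), (convOne : List A → ℂ)) ∧
        extStar ν q p = ((0 : Fin d → ℂ), (convOne : List A → ℂ))) := by
  refine ⟨?_, ?_, ?_, ?_⟩
  · intro p q hp hq
    exact isChar_conv hp (XiU_char ν hν hν0 _ hq)
  · intro p q r hp hq hr
    have hr' := (XiU_char ν hν hν0 q.1 hr).1
    refine Prod.ext ?_ ?_
    · simp [extStar, conv_nil, hr', hq.1, hr.1, add_assoc]
    · simp only [extStar, hq.1, one_smul]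
      rw [conv_assoc, XiU_conv ν hν, XiU_XiU]
  · intro p hp
    refine ⟨Prod.ext ?_ ?_, Prod.ext ?_ ?_⟩
    · simp [extStar]
    · simp [extStar, XiU_zero, conv_one_left]
    · simp [extStar, convOne]
    · simp [extStar, XiU_one ν hν0, conv_one_right]
  · intro p hp
    have hq := XiU_char ν hν hν0 (-p.1) (isChar_antip hp)
    refine ⟨(-p.1, XiU ν (-p.1) (antip p.2)), hq, Prod.ext ?_ ?_, Prod.ext ?_ ?_⟩
    · simp [extStar, hq.1]
    · simp [extStar, XiU_XiU, XiU_zero, conv_antip hp]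
    · simp [extStar, hp.1]
    · simp only [extStar]
      rw [← XiU_conv ν hν, antip_conv hp, XiU_one ν hν0]
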